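/- arXiv:1405.7578 — 6 statements merged into one kernel-verified Lean document; each statement's English description precedes it below -/
import Mathlib

section
/- Let c > 0, let m, n be positive integers, and let S > 2cmn/sqrt(m^2 + n^2). Every point (x, y) satisfying m·sqrt((x - c)^2 + y^2) + n·sqrt((x + c)^2 + y^2) = S lies in the closed disc (x - c(m^2 - n^2)/(m^2 + n^2))^2 + y^2 <= R^2, where R = sqrt(S^2 (m^2 + n^2) - 4 c^2 m^2 n^2)/(m^2 + n^2). -/
/-!
Squaring `m R₁ + n R₂ = S` and dropping the nonnegative cross term gives `m² R₁² + n² R₂² ≤ S²`.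
By Stewart's theorem the left side is `(m² + n²) d² + m² n² (2c)² / (m² + n²)`, where `d` is the
distance to the barycentre of the foci with weights `m²` and `n²`. That barycentre is the centre of
the circle, and solving for `d` gives its radius.
-/

open AffineMap

section InnerProductSpace

variable {V P : Type*} [NormedAddCommGroup V] [InnerProductSpace ℝ V] [MetricSpace P]
  [NormedAddTorsor V P]

-- Stewart's theorem, in a form that also allows `f = g` and points outside the segment,
-- unlike `EuclideanGeometry.dist_sq_mul_dist_add_dist_sq_mul_dist`.
theorem dist_sq_lineMap (p f g : P) (t : ℝ) :
    dist p (lineMap f g t) ^ 2 =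
      (1 - t) * dist p f ^ 2 + t * dist p g ^ 2 - t * (1 - t) * dist f g ^ 2 := by
  have to_lineMap : p -ᵥ lineMap f g t = (p -ᵥ f) - t • (g -ᵥ f) := by
    rw [lineMap_apply, vsub_vadd_eq_vsub_sub]
  have to_right : p -ᵥ g = (p -ᵥ f) - (g -ᵥ f) := (vsub_sub_vsub_cancel_right p g f).symm
  rw [dist_comm f g]
  simp only [dist_eq_norm_vsub V, to_lineMap, to_right, norm_sub_sq_real, norm_smul, mul_pow,
    inner_smul_right, Real.norm_eq_abs, sq_abs]
  ring

theorem add_mul_dist_lineMap_sq {s t : ℝ} (hst : s + t ≠ 0) (p f g : P) :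
    ((s + t) * dist p (lineMap f g (t / (s + t)))) ^ 2 =
      (s * dist p f ^ 2 + t * dist p g ^ 2) * (s + t) - dist f g ^ 2 * s * t := by
  rw [mul_pow, dist_sq_lineMap]
  field_simp
  ring

theorem cartesian_oval_plus_in_disc_general {a b S : ℝ} (ha : 0 ≤ a) (hb : 0 ≤ b)
    (hab : a ^ 2 + b ^ 2 ≠ 0) {p f g : P} (h : a * dist p f + b * dist p g ≤ S) :
    dist p (lineMap f g (b ^ 2 / (a ^ 2 + b ^ 2))) ≤
      √(S ^ 2 * (a ^ 2 + b ^ 2) - dist f g ^ 2 * a ^ 2 * b ^ 2) / (a ^ 2 + b ^ 2) := by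
  have weighted_sq_le : a ^ 2 * dist p f ^ 2 + b ^ 2 * dist p g ^ 2 ≤ S ^ 2 := calc
    a ^ 2 * dist p f ^ 2 + b ^ 2 * dist p g ^ 2
      = (a * dist p f) ^ 2 + (b * dist p g) ^ 2 := by rw [mul_pow, mul_pow]
    _ ≤ (a * dist p f + b * dist p g) ^ 2 :=
      pow_add_pow_le (by positivity) (by positivity) two_ne_zero
    _ ≤ S ^ 2 := by gcongr
  rw [le_div_iff₀' (by positivity)]
  apply Real.le_sqrt_of_sq_le
  rw [add_mul_dist_lineMap_sq hab]
  gcongr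

end InnerProductSpace

theorem dist_mk_zero_mk_neg_zero_sq (c : ℝ) : dist (⟨c, 0⟩ : ℂ) ⟨-c, 0⟩ ^ 2 = 4 * c ^ 2 := by
  rw [Complex.dist_mk, Real.sq_sqrt (by positivity)]
  ring

theorem lineMap_mk_zero_mk_neg_zero {s t : ℝ} (hst : s + t ≠ 0) (c : ℝ) :
    lineMap (⟨c, 0⟩ : ℂ) ⟨-c, 0⟩ (t / (s + t)) = ⟨c * (s - t) / (s + t), 0⟩ := by
  rw [lineMap_apply_module]
  apply Complex.ext
  · simp only [Complex.add_re, Complex.smul_re, smul_eq_mul]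
    field_simp
    ring
  · simp only [Complex.add_im, Complex.smul_im, smul_zero, add_zero]

theorem cartesian_oval_plus_in_disc
    (c : ℝ) (hc : 0 < c) (m n : ℕ) (hm : 0 < m) (hn : 0 < n)
    (S : ℝ) (hS : S > 2 * c * m * n / Real.sqrt ((m : ℝ) ^ 2 + (n : ℝ) ^ 2))
    (x y : ℝ)
    (h : (m : ℝ) * Real.sqrt ((x - c) ^ 2 + y ^ 2)
        + (n : ℝ) * Real.sqrt ((x + c) ^ 2 + y ^ 2) = S) :
    (x - c * ((m : ℝ) ^ 2 - (n : ℝ) ^ 2) / ((m : ℝ) ^ 2 + (n : ℝ) ^ 2)) ^ 2 + y ^ 2 ≤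
      (Real.sqrt (S ^ 2 * ((m : ℝ) ^ 2 + (n : ℝ) ^ 2) - 4 * c ^ 2 * (m : ℝ) ^ 2 * (n : ℝ) ^ 2)
        / ((m : ℝ) ^ 2 + (n : ℝ) ^ 2)) ^ 2 := by
  have hmn : (m : ℝ) ^ 2 + (n : ℝ) ^ 2 ≠ 0 := by positivity
  have in_disc := cartesian_oval_plus_in_disc_general m.cast_nonneg n.cast_nonneg hmn
    (p := (⟨x, y⟩ : ℂ)) (f := ⟨c, 0⟩) (g := ⟨-c, 0⟩) (by simpa [Complex.dist_mk] using h.le)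
  rw [lineMap_mk_zero_mk_neg_zero hmn, dist_mk_zero_mk_neg_zero_sq, Complex.dist_mk, sub_zero]
    at in_disc
  exact (Real.sqrt_le_iff.mp in_disc).2
end

section
/- Let c > 0, let m, n be positive integers, and let S > 2cmn/sqrt(m^2 + n^2). Every point (x, y) satisfying m·sqrt((x - c)^2 + y^2) - n·sqrt((x + c)^2 + y^2) = S lies in the closed exterior (x - c(m^2 - n^2)/(m^2 + n^2))^2 + y^2 >= R^2 of the circle with center (c(m^2 - n^2)/(m^2 + n^2), 0) and radius R = sqrt(S^2 (m^2 + n^2) - 4 c^2 m^2 n^2)/(m^2 + n^2). -/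
/-!
Dropping the nonpositive cross term from the square of `m * R₁ - n * R₂ = S` gives
`S ^ 2 ≤ m ^ 2 * R₁ ^ 2 + n ^ 2 * R₂ ^ 2`. By Stewart's theorem the right-hand side is, up to an
additive constant, `(m ^ 2 + n ^ 2) * d ^ 2`, where `d` is the distance to the barycenter of
`F₂` and `F₁` with weights `m ^ 2` and `n ^ 2`. This barycenter is the center of the circle, and
solving for `d ^ 2` produces its radius.
-/

open AffineMap (lineMap)

theorem sub_sq_le_sq_add_sq_of_mul_nonneg {R : Type*} [CommRing R] [LinearOrder R]
    [IsStrictOrderedRing R] {u v : R} (huv : 0 ≤ u * v) : (u - v) ^ 2 ≤ u ^ 2 + v ^ 2 := by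
  linarith [sub_sq u v]

section InnerProductSpace

variable {V P : Type*} [NormedAddCommGroup V] [InnerProductSpace ℝ V] [MetricSpace P]
  [NormedAddTorsor V P]

theorem dist_sq_lineMap_eq (p q z : P) (t : ℝ) :
    dist z (lineMap p q t) ^ 2 =
      (1 - t) * dist z p ^ 2 + t * dist z q ^ 2 - t * (1 - t) * dist p q ^ 2 := by
  have vsub_lineMap : z -ᵥ lineMap p q t = (z -ᵥ p) - t • (q -ᵥ p) := by
    rw [AffineMap.lineMap_apply, vsub_vadd_eq_vsub_sub]
  have vsub_right : z -ᵥ q = (z -ᵥ p) - (q -ᵥ p) := (vsub_sub_vsub_cancel_right z q p).symm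
  rw [dist_comm p q, dist_eq_norm_vsub V z (lineMap p q t), dist_eq_norm_vsub V z q,
    dist_eq_norm_vsub V z p, dist_eq_norm_vsub V q p, vsub_lineMap, vsub_right,
    norm_sub_sq_real, norm_sub_sq_real, real_inner_smul_right, norm_smul, mul_pow,
    Real.norm_eq_abs, sq_abs]
  ring

theorem add_mul_weighted_dist_sq (p q z : P) {u v : ℝ} (huv : u + v ≠ 0) :
    (u + v) * (u * dist z q ^ 2 + v * dist z p ^ 2) =
      dist z (lineMap p q (u / (u + v))) ^ 2 * (u + v) ^ 2 + u * v * dist p q ^ 2 := by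
  rw [dist_sq_lineMap_eq]
  field_simp
  ring

theorem cartesian_oval_minus_in_exterior_general (F₁ F₂ z : P) {m n S : ℝ} (hmn : 0 ≤ m * n)
    (hne : m ^ 2 + n ^ 2 ≠ 0) (h : m * dist z F₂ - n * dist z F₁ = S) :
    (S ^ 2 * (m ^ 2 + n ^ 2) - (m * n * dist F₁ F₂) ^ 2) / (m ^ 2 + n ^ 2) ^ 2 ≤
      dist z (lineMap F₁ F₂ (m ^ 2 / (m ^ 2 + n ^ 2))) ^ 2 := by
  have cross_nonneg : 0 ≤ (m * dist z F₂) * (n * dist z F₁) := by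
    rw [mul_mul_mul_comm]
    positivity
  have S_sq_le : S ^ 2 ≤ m ^ 2 * dist z F₂ ^ 2 + n ^ 2 * dist z F₁ ^ 2 := by
    simpa only [h, mul_pow] using sub_sq_le_sq_add_sq_of_mul_nonneg cross_nonneg
  rw [div_le_iff₀ (by positivity), sub_le_iff_le_add, mul_pow, mul_pow,
    ← add_mul_weighted_dist_sq F₁ F₂ z hne, mul_comm (S ^ 2)]
  gcongr

end InnerProductSpace

theorem dist_plane_eq_sqrt (x₁ y₁ x₂ y₂ : ℝ) :
    dist !₂[x₁, y₁] !₂[x₂, y₂] = √((x₁ - x₂) ^ 2 + (y₁ - y₂) ^ 2) := by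
  simp [EuclideanSpace.dist_eq, Real.dist_eq, sq_abs]

theorem dist_sq_plane (x₁ y₁ x₂ y₂ : ℝ) :
    dist !₂[x₁, y₁] !₂[x₂, y₂] ^ 2 = (x₁ - x₂) ^ 2 + (y₁ - y₂) ^ 2 := by
  rw [dist_plane_eq_sqrt, Real.sq_sqrt (by positivity)]

theorem lineMap_foci_eq_center (c : ℝ) {u v : ℝ} (huv : u + v ≠ 0) :
    lineMap !₂[-c, 0] !₂[c, 0] (u / (u + v)) = !₂[c * (u - v) / (u + v), 0] := by
  have first_coord : u / (u + v) * (c + c) + -c = c * (u - v) / (u + v) := by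
    field_simp
    ring
  ext i
  fin_cases i <;> simp [AffineMap.lineMap_apply, first_coord]

theorem sq_le_sq_mul_of_div_sqrt_lt {k M S : ℝ} (hk : 0 ≤ k) (hM : 0 < M) (h : k / √M < S) :
    k ^ 2 ≤ S ^ 2 * M := by
  have k_lt : k < S * √M := (div_lt_iff₀ (Real.sqrt_pos.mpr hM)).mp h
  calc
    k ^ 2 ≤ (S * √M) ^ 2 := by gcongr
    _ = S ^ 2 * M := by rw [mul_pow, Real.sq_sqrt hM.le]

theorem cartesian_oval_minus_in_exterior
    (c : ℝ) (hc : 0 < c) (m n : ℕ) (hm : 0 < m) (hn : 0 < n)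
    (S : ℝ) (hS : S > 2 * c * m * n / Real.sqrt ((m : ℝ) ^ 2 + (n : ℝ) ^ 2))
    (x y : ℝ)
    (h : (m : ℝ) * Real.sqrt ((x - c) ^ 2 + y ^ 2)
        - (n : ℝ) * Real.sqrt ((x + c) ^ 2 + y ^ 2) = S) :
    (x - c * ((m : ℝ) ^ 2 - (n : ℝ) ^ 2) / ((m : ℝ) ^ 2 + (n : ℝ) ^ 2)) ^ 2 + y ^ 2 ≥
      (Real.sqrt (S ^ 2 * ((m : ℝ) ^ 2 + (n : ℝ) ^ 2) - 4 * c ^ 2 * (m : ℝ) ^ 2 * (n : ℝ) ^ 2)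
        / ((m : ℝ) ^ 2 + (n : ℝ) ^ 2)) ^ 2 := by
  have weight_pos : 0 < (m : ℝ) ^ 2 + (n : ℝ) ^ 2 := by positivity
  have radicand_nonneg :
      0 ≤ S ^ 2 * ((m : ℝ) ^ 2 + (n : ℝ) ^ 2) - 4 * c ^ 2 * (m : ℝ) ^ 2 * (n : ℝ) ^ 2 := by
    linarith [sq_le_sq_mul_of_div_sqrt_lt (by positivity) weight_pos hS]
  have oval : m * dist !₂[x, y] !₂[c, 0] - n * dist !₂[x, y] !₂[-c, 0] = S := by
    simpa only [dist_plane_eq_sqrt, sub_neg_eq_add, sub_zero] using h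
  have exterior :=
    cartesian_oval_minus_in_exterior_general _ _ _ (by positivity) weight_pos.ne' oval
  rw [lineMap_foci_eq_center c weight_pos.ne', mul_pow, dist_sq_plane, dist_sq_plane] at exterior
  rw [div_pow, Real.sq_sqrt radicand_nonneg]
  convert exterior using 2 <;> ring
end

section
/- Let c > 0, let m, n be positive integers, and let S > 0. Set Q1 = (x - c)^2 + y^2 and Q2 = (x + c)^2 + y^2. If a point (x, y) satisfies the algebraic equation 4 m^2 n^2 Q1 Q2 = (S^2 - m^2 Q1 - n^2 Q2)^2 together with the condition S^2 - m^2 Q1 - n^2 Q2 <= 0, then |m·sqrt(Q1) - n·sqrt(Q2)| = S. -/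
/-!
Put `u = m √Q₁`, `v = n √Q₂` and `d = S² - u² - v²`. The quartic equation is `(2uv)² = d²`, that
is, `d = ± 2uv`, and since `2uv ≥ 0` the condition `d ≤ 0` selects `d = -2uv`. This is
`S² = (u - v)²`; the other sign would give the oval `u + v = S`.
-/

section OrderedRing

variable {R : Type*} [CommRing R] [LinearOrder R] [IsStrictOrderedRing R] {a d s t u v : R}

theorem eq_neg_iff_sq_eq_sq_and_nonpos (ha : 0 ≤ a) : a = -d ↔ a ^ 2 = d ^ 2 ∧ d ≤ 0 := by
  constructor
  · rintro rfl
    exact ⟨neg_sq d, neg_nonneg.mp ha⟩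
  · rintro ⟨hsq, hd⟩
    rwa [← neg_sq d, sq_eq_sq₀ ha (neg_nonneg.mpr hd)] at hsq

theorem sub_sq_eq_iff_of_mul_nonneg (huv : 0 ≤ u * v) :
    (u - v) ^ 2 = t ↔
      4 * u ^ 2 * v ^ 2 = (t - u ^ 2 - v ^ 2) ^ 2 ∧ t - u ^ 2 - v ^ 2 ≤ 0 := by
  calc (u - v) ^ 2 = t ↔ 2 * (u * v) = -(t - u ^ 2 - v ^ 2) := by
        constructor <;> intro h <;> linear_combination -h
    _ ↔ (2 * (u * v)) ^ 2 = (t - u ^ 2 - v ^ 2) ^ 2 ∧ t - u ^ 2 - v ^ 2 ≤ 0 :=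
        eq_neg_iff_sq_eq_sq_and_nonpos (mul_nonneg zero_le_two huv)
    _ ↔ 4 * u ^ 2 * v ^ 2 = (t - u ^ 2 - v ^ 2) ^ 2 ∧ t - u ^ 2 - v ^ 2 ≤ 0 := by
        rw [show (2 * (u * v)) ^ 2 = 4 * u ^ 2 * v ^ 2 by ring]

theorem abs_sub_eq_iff_of_mul_nonneg (huv : 0 ≤ u * v) (hs : 0 ≤ s) :
    |u - v| = s ↔
      4 * u ^ 2 * v ^ 2 = (s ^ 2 - u ^ 2 - v ^ 2) ^ 2 ∧ s ^ 2 - u ^ 2 - v ^ 2 ≤ 0 := by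
  rw [← sub_sq_eq_iff_of_mul_nonneg huv, sq_eq_sq_iff_abs_eq_abs, abs_of_nonneg hs]

end OrderedRing

theorem cartesian_oval_minus_extraction_general {m n S Q1 Q2 : ℝ} (hmn : 0 ≤ m * n)
    (hS : 0 ≤ S) (hQ1 : 0 ≤ Q1) (hQ2 : 0 ≤ Q2) :
    |m * √Q1 - n * √Q2| = S ↔
      4 * m ^ 2 * n ^ 2 * Q1 * Q2 = (S ^ 2 - m ^ 2 * Q1 - n ^ 2 * Q2) ^ 2 ∧
        S ^ 2 - m ^ 2 * Q1 - n ^ 2 * Q2 ≤ 0 := by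
  have huv : 0 ≤ m * √Q1 * (n * √Q2) := by
    rw [mul_mul_mul_comm]
    positivity
  rw [abs_sub_eq_iff_of_mul_nonneg huv hS, mul_pow, mul_pow, Real.sq_sqrt hQ1, Real.sq_sqrt hQ2,
    show 4 * (m ^ 2 * Q1) * (n ^ 2 * Q2) = 4 * m ^ 2 * n ^ 2 * Q1 * Q2 by ring]

theorem cartesian_oval_minus_extraction
    (c : ℝ) (hc : 0 < c) (m n : ℕ) (hm : 0 < m) (hn : 0 < n)
    (S : ℝ) (hS : 0 < S) (x y : ℝ)
    (Q1 Q2 : ℝ) (hQ1 : Q1 = (x - c) ^ 2 + y ^ 2) (hQ2 : Q2 = (x + c) ^ 2 + y ^ 2)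
    (halg : 4 * (m : ℝ) ^ 2 * (n : ℝ) ^ 2 * Q1 * Q2
        = (S ^ 2 - (m : ℝ) ^ 2 * Q1 - (n : ℝ) ^ 2 * Q2) ^ 2)
    (hext : S ^ 2 - (m : ℝ) ^ 2 * Q1 - (n : ℝ) ^ 2 * Q2 ≤ 0) :
    |(m : ℝ) * Real.sqrt Q1 - (n : ℝ) * Real.sqrt Q2| = S :=
  (cartesian_oval_minus_extraction_general (by positivity) hS.le (hQ1 ▸ by positivity)
    (hQ2 ▸ by positivity)).mpr ⟨halg, hext⟩
end

section
/- Let p, q, r be real numbers and S > 0. Every point (x, y) satisfying sqrt((x - p)^2 + y^2) + sqrt((x - q)^2 + y^2) + sqrt(x^2 + (y - r)^2) = S satisfies the eighth-order algebraic equation 64 S^2 Q1 Q2 Q3 = ((S^2 + Q3 - Q2 - Q1)^2 - 4 Q1 Q2 - 4 S^2 Q3)^2, where Q1 = (x - p)^2 + y^2, Q2 = (x - q)^2 + y^2, Q3 = x^2 + (y - r)^2. -/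
/-!
Write `a + b + c = S` as `S - c = a + b` and square: the squares of `a, b, c, S` move to one side
and leave `2ab + 2Sc`. Squaring again leaves the single product `8abcS`, whose square is a
polynomial in `a², b², c², S²`. Squaring is only used forwards, so the signs of `a, b, c` never
matter and the argument takes place in a commutative ring.
-/

section CommRing

variable {R : Type*} [CommRing R] {a b c S : R}

theorem sq_add_sq_sub_sq_sub_sq_of_add_add_eq (h : a + b + c = S) :
    S ^ 2 + c ^ 2 - b ^ 2 - a ^ 2 = 2 * (a * b) + 2 * (S * c) := by
  have first_squaring : (S - c) ^ 2 = (a + b) ^ 2 := by rw [eq_sub_of_add_eq h]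
  linear_combination first_squaring

theorem sq_sub_four_mul_sq_sub_four_mul_sq_of_add_add_eq (h : a + b + c = S) :
    (S ^ 2 + c ^ 2 - b ^ 2 - a ^ 2) ^ 2 - 4 * a ^ 2 * b ^ 2 - 4 * S ^ 2 * c ^ 2
      = 8 * (a * b * c * S) := by
  rw [sq_add_sq_sub_sq_sub_sq_of_add_add_eq h]
  ring

theorem trifocal_ellipse_satisfies_octic_general {Q1 Q2 Q3 : R}
    (hQ1 : a ^ 2 = Q1) (hQ2 : b ^ 2 = Q2) (hQ3 : c ^ 2 = Q3) (h : a + b + c = S) :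
    64 * S ^ 2 * Q1 * Q2 * Q3
      = ((S ^ 2 + Q3 - Q2 - Q1) ^ 2 - 4 * Q1 * Q2 - 4 * S ^ 2 * Q3) ^ 2 := by
  subst hQ1 hQ2 hQ3
  rw [sq_sub_four_mul_sq_sub_four_mul_sq_of_add_add_eq h]
  ring

end CommRing

theorem trifocal_ellipse_satisfies_octic
    (p q r S : ℝ) (hS : 0 < S) (x y : ℝ)
    (Q1 Q2 Q3 : ℝ) (hQ1 : Q1 = (x - p) ^ 2 + y ^ 2) (hQ2 : Q2 = (x - q) ^ 2 + y ^ 2)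
    (hQ3 : Q3 = x ^ 2 + (y - r) ^ 2)
    (h : Real.sqrt Q1 + Real.sqrt Q2 + Real.sqrt Q3 = S) :
    64 * S ^ 2 * Q1 * Q2 * Q3
      = ((S ^ 2 + Q3 - Q2 - Q1) ^ 2 - 4 * Q1 * Q2 - 4 * S ^ 2 * Q3) ^ 2 :=
  trifocal_ellipse_satisfies_octic_general (Real.sq_sqrt (by rw [hQ1]; positivity))
    (Real.sq_sqrt (by rw [hQ2]; positivity)) (Real.sq_sqrt (by rw [hQ3]; positivity)) h
end

section
/- Let p, q, r be real numbers and S > 0, and let (x, y) be a point with Q1 = (x - p)^2 + y^2, Q2 = (x - q)^2 + y^2, Q3 = x^2 + (y - r)^2. Suppose (x, y) satisfies the eighth-order algebraic equation 64 S^2 Q1 Q2 Q3 = ((S^2 + Q3 - Q2 - Q1)^2 - 4 Q1 Q2 - 4 S^2 Q3)^2, together with the three conditions: (i) Q3 <= S^2 (the point lies in the closed disc x^2 + (y - r)^2 <= S^2); (ii) S^2 + Q3 - Q1 - Q2 >= 0 (the point lies in the closed disc (x - p - q)^2 + (y + r)^2 <= S^2 + 2pq + 2r^2); and (iii) S^4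 + Q1^2 + Q2^2 + Q3^2 - 2 S^2 (Q1 + Q2 + Q3) - 2 (Q1 Q2 + Q1 Q3 + Q2 Q3) >= 0. Then sqrt(Q1) + sqrt(Q2) + sqrt(Q3) = S, i.e. (x, y) lies on the trifocal ellipse R1 + R2 + R3 = S. -/
/-!
Eliminating the radicals from `R₁ + R₂ + R₃ = S` takes three squarings: of `R₁ + R₂ = S - R₃`, of
`S² + R₃² - R₁² - R₂² = 2 (R₁ R₂ + S R₃)`, and of the equation of degree four for `8 S R₁ R₂ R₃`
that results. Each squaring is reversible as soon as both of its sides are nonnegative. One side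
always is; the sign of the other is exactly the condition that the point lies inside one of the
two circles (for the first two squarings) or inside the fourth-order curve (for the third).
-/

section Squarings

variable {K : Type*} [CommRing K] [LinearOrder K] [IsStrictOrderedRing K] {a b c s : K}

theorem add_add_eq_iff_quadratic_eq (ha : 0 ≤ a) (hb : 0 ≤ b) (hcs : c ≤ s) :
    a + b + c = s ↔ s ^ 2 + c ^ 2 - a ^ 2 - b ^ 2 = 2 * (a * b + s * c) :=
  calc a + b + c = s
    _ ↔ a + b = s - c := eq_sub_iff_add_eq.symm
    _ ↔ (a + b) ^ 2 = (s - c) ^ 2 := (sq_eq_sq₀ (add_nonneg ha hb) (sub_nonneg.2 hcs)).symm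
    _ ↔ s ^ 2 + c ^ 2 - a ^ 2 - b ^ 2 = 2 * (a * b + s * c) := by
      constructor <;> intro h <;> linear_combination -h

theorem quadratic_eq_iff_quartic_eq (ha : 0 ≤ a) (hb : 0 ≤ b) (hc : 0 ≤ c) (hs : 0 ≤ s)
    (hquadratic : 0 ≤ s ^ 2 + c ^ 2 - a ^ 2 - b ^ 2) :
    s ^ 2 + c ^ 2 - a ^ 2 - b ^ 2 = 2 * (a * b + s * c) ↔
      8 * s * a * b * c
        = (s ^ 2 + c ^ 2 - a ^ 2 - b ^ 2) ^ 2 - 4 * a ^ 2 * b ^ 2 - 4 * s ^ 2 * c ^ 2 := by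
  rw [← sq_eq_sq₀ hquadratic (by positivity)]
  constructor <;> intro h <;> linear_combination -h

theorem quartic_eq_iff_octic_eq (ha : 0 ≤ a) (hb : 0 ≤ b) (hc : 0 ≤ c) (hs : 0 ≤ s)
    (hquartic : 0 ≤ (s ^ 2 + c ^ 2 - a ^ 2 - b ^ 2) ^ 2 - 4 * a ^ 2 * b ^ 2 - 4 * s ^ 2 * c ^ 2) :
    8 * s * a * b * c
        = (s ^ 2 + c ^ 2 - a ^ 2 - b ^ 2) ^ 2 - 4 * a ^ 2 * b ^ 2 - 4 * s ^ 2 * c ^ 2 ↔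
      64 * s ^ 2 * a ^ 2 * b ^ 2 * c ^ 2
        = ((s ^ 2 + c ^ 2 - a ^ 2 - b ^ 2) ^ 2 - 4 * a ^ 2 * b ^ 2 - 4 * s ^ 2 * c ^ 2) ^ 2 := by
  rw [← sq_eq_sq₀ (by positivity) hquartic]
  ring_nf

end Squarings

theorem trifocal_ellipse_extraction_general {K : Type*} [CommRing K] [LinearOrder K]
    [IsStrictOrderedRing K] {R1 R2 R3 S Q1 Q2 Q3 : K}
    (hR1 : 0 ≤ R1) (hR2 : 0 ≤ R2) (hR3 : 0 ≤ R3) (hS : 0 ≤ S)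
    (hQ1 : R1 ^ 2 = Q1) (hQ2 : R2 ^ 2 = Q2) (hQ3 : R3 ^ 2 = Q3)
    (halg : 64 * S ^ 2 * Q1 * Q2 * Q3
        = ((S ^ 2 + Q3 - Q2 - Q1) ^ 2 - 4 * Q1 * Q2 - 4 * S ^ 2 * Q3) ^ 2)
    (hcircle₁ : Q3 ≤ S ^ 2)
    (hcircle₂ : 0 ≤ S ^ 2 + Q3 - Q1 - Q2)
    (hquartic : 0 ≤ S ^ 4 + Q1 ^ 2 + Q2 ^ 2 + Q3 ^ 2 - 2 * S ^ 2 * (Q1 + Q2 + Q3)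
        - 2 * (Q1 * Q2 + Q1 * Q3 + Q2 * Q3)) :
    R1 + R2 + R3 = S := by
  subst hQ1 hQ2 hQ3
  rw [add_add_eq_iff_quadratic_eq hR1 hR2 ((sq_le_sq₀ hR3 hS).1 hcircle₁),
    quadratic_eq_iff_quartic_eq hR1 hR2 hR3 hS hcircle₂,
    quartic_eq_iff_octic_eq hR1 hR2 hR3 hS (hquartic.trans_eq (by ring)), halg]
  ring

theorem trifocal_ellipse_extraction
    (p q r S : ℝ) (hS : 0 < S) (x y : ℝ)
    (Q1 Q2 Q3 : ℝ) (hQ1 : Q1 = (x - p) ^ 2 + y ^ 2) (hQ2 : Q2 = (x - q) ^ 2 + y ^ 2)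
    (hQ3 : Q3 = x ^ 2 + (y - r) ^ 2)
    (halg : 64 * S ^ 2 * Q1 * Q2 * Q3
        = ((S ^ 2 + Q3 - Q2 - Q1) ^ 2 - 4 * Q1 * Q2 - 4 * S ^ 2 * Q3) ^ 2)
    (h1 : Q3 ≤ S ^ 2)
    (h2 : S ^ 2 + Q3 - Q1 - Q2 ≥ 0)
    (h3 : S ^ 4 + Q1 ^ 2 + Q2 ^ 2 + Q3 ^ 2 - 2 * S ^ 2 * (Q1 + Q2 + Q3)
        - 2 * (Q1 * Q2 + Q1 * Q3 + Q2 * Q3) ≥ 0) :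
    Real.sqrt Q1 + Real.sqrt Q2 + Real.sqrt Q3 = S :=
  trifocal_ellipse_extraction_general (Real.sqrt_nonneg _) (Real.sqrt_nonneg _)
    (Real.sqrt_nonneg _) hS.le (Real.sq_sqrt (hQ1 ▸ by positivity))
    (Real.sq_sqrt (hQ2 ▸ by positivity)) (Real.sq_sqrt (hQ3 ▸ by positivity)) halg h1 h2 h3
end

section
/- Let A, B, C be three non-collinear points in the Euclidean plane and let P be a point in the interior of the triangle ABC. Let R1, R2, R3 be the distances from P to the vertices A, B, C, and let r1, r2, r3 be the distances from P to the lines BC, CA, AB. Then R1 + R2 + R3 >= 2(r1 + r2 + r3) (the Erdős–Mordell inequality). -/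
/-!
Write `R₁, R₂, R₃` for the distances from `P` to the vertices, and `θ₁, θ₂, θ₃` for the angles which
the sides subtend at `P`. As in Barrow's proof, the distance from `P` to the side `BC` is at most
the length of the bisector of the angle `θ₁ = ∠ B P C`, which is
`2 R₂ R₃ / (R₂ + R₃) * cos (θ₁ / 2) ≤ √R₂ √R₃ cos (θ₁ / 2)`. The half-angles `θᵢ / 2` add up to `π`,
so the theorem follows from the trigonometric inequality
`2 (y z cos α + z x cos β + x y cos γ) ≤ x² + y² + z²`, valid whenever `α + β + γ = π`.
-/

open Real EuclideanGeometry

theorem two_mul_add_cos_le_add_sq_of_add_eq_pi (x y z : ℝ) {α β γ : ℝ} (h : α + β + γ = π) :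
    2 * (y * z * cos α + z * x * cos β + x * y * cos γ) ≤ x ^ 2 + y ^ 2 + z ^ 2 := by
  have cos_α : cos α = sin β * sin γ - cos β * cos γ := by
    rw [show α = π - (β + γ) by linarith, cos_pi_sub, cos_add]
    ring
  have sum_of_squares : x ^ 2 + y ^ 2 + z ^ 2
      - 2 * (y * z * cos α + z * x * cos β + x * y * cos γ)
      = (x - y * cos γ - z * cos β) ^ 2 + (y * sin γ - z * sin β) ^ 2 := by
    rw [cos_α]
    linear_combination -z ^ 2 * sin_sq_add_cos_sq β - y ^ 2 * sin_sq_add_cos_sq γ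
  rw [← sub_nonneg, sum_of_squares]
  positivity

section Angle

variable {V : Type*} [NormedAddCommGroup V] [InnerProductSpace ℝ V]

theorem cos_half_angle_nonneg (x y : V) : 0 ≤ cos (InnerProductGeometry.angle x y / 2) :=
  cos_nonneg_of_mem_Icc ⟨by linarith [InnerProductGeometry.angle_nonneg x y, pi_pos],
    by linarith [InnerProductGeometry.angle_le_pi x y]⟩

theorem norm_norm_smul_add_norm_smul (x y : V) :
    ‖‖y‖ • x + ‖x‖ • y‖ = 2 * (‖x‖ * ‖y‖) * cos (InnerProductGeometry.angle x y / 2) := by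
  have inner_eq : inner ℝ x y
      = (2 * cos (InnerProductGeometry.angle x y / 2) ^ 2 - 1) * (‖x‖ * ‖y‖) := by
    rw [← cos_two_mul, mul_div_cancel₀ _ two_ne_zero,
      InnerProductGeometry.cos_angle_mul_norm_mul_norm]
  have cos_nonneg := cos_half_angle_nonneg x y
  rw [← sq_eq_sq₀ (norm_nonneg _) (by positivity), norm_add_sq_real, real_inner_smul_left,
    real_inner_smul_right, inner_eq, norm_smul, norm_smul, norm_norm, norm_norm]
  ring

variable {E : Type*} [MetricSpace E] [NormedAddTorsor V E]

theorem add_dist_mul_infDist_affineSpan_pair_le (P B C : E) :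
    (dist P B + dist P C) * Metric.infDist P (affineSpan ℝ {B, C} : Set E)
      ≤ 2 * (dist P B * dist P C) * cos (∠ B P C / 2) := by
  rcases eq_or_ne P B with rfl | hPB
  · simp [Metric.infDist_zero_of_mem (left_mem_affineSpan_pair ℝ P C)]
  have hpos : 0 < dist P B + dist P C := add_pos_of_pos_of_nonneg (dist_pos.2 hPB) dist_nonneg
  let t := dist P B / (dist P B + dist P C)
  -- The foot of the bisector divides `BC` in the ratio `PB : PC`.
  let foot := AffineMap.lineMap (k := ℝ) B C t
  have smul_foot : (dist P B + dist P C) • (foot -ᵥ P)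
      = dist P C • (B -ᵥ P) + dist P B • (C -ᵥ P) := by
    have ht_mul : (dist P B + dist P C) * t = dist P B := mul_div_cancel₀ _ hpos.ne'
    rw [show foot = t • (C -ᵥ B) +ᵥ B from AffineMap.lineMap_apply B C t, vadd_vsub_assoc,
      ← vsub_sub_vsub_cancel_right C B P, smul_add, smul_smul, ht_mul]
    module
  calc (dist P B + dist P C) * Metric.infDist P (affineSpan ℝ {B, C} : Set E)
      ≤ (dist P B + dist P C) * dist P foot := by
        gcongr
        exact Metric.infDist_le_dist_of_mem (AffineMap.lineMap_mem_affineSpan_pair t B C)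
    _ = ‖(dist P B + dist P C) • (foot -ᵥ P)‖ := by
        rw [norm_smul, norm_of_nonneg hpos.le, dist_eq_norm_vsub' V P foot]
    _ = 2 * (dist P B * dist P C) * cos (∠ B P C / 2) := by
        rw [smul_foot, dist_eq_norm_vsub' V P B, dist_eq_norm_vsub' V P C,
          norm_norm_smul_add_norm_smul, EuclideanGeometry.angle]

theorem infDist_affineSpan_pair_le_sqrt_mul_sqrt_mul_cos (P B C : E) :
    Metric.infDist P (affineSpan ℝ {B, C} : Set E)
      ≤ √(dist P B) * √(dist P C) * cos (∠ B P C / 2) := by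
  rcases eq_or_ne P B with rfl | hPB
  · simp [Metric.infDist_zero_of_mem (left_mem_affineSpan_pair ℝ P C)]
  have hpos : 0 < dist P B + dist P C := add_pos_of_pos_of_nonneg (dist_pos.2 hPB) dist_nonneg
  have cos_nonneg : 0 ≤ cos (∠ B P C / 2) := cos_half_angle_nonneg _ _
  have am_gm : 2 * (√(dist P B) * √(dist P C)) ≤ dist P B + dist P C := by
    simpa [mul_assoc] using two_mul_le_add_sq √(dist P B) √(dist P C)
  have mul_eq : dist P B * dist P C = (√(dist P B) * √(dist P C)) ^ 2 := by
    simp [mul_pow]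
  refine le_of_mul_le_mul_left ?_ hpos
  calc (dist P B + dist P C) * Metric.infDist P (affineSpan ℝ {B, C} : Set E)
      ≤ 2 * (dist P B * dist P C) * cos (∠ B P C / 2) :=
        add_dist_mul_infDist_affineSpan_pair_le P B C
    _ = 2 * (√(dist P B) * √(dist P C)) * (√(dist P B) * √(dist P C) * cos (∠ B P C / 2)) := by
        rw [mul_eq]
        ring
    _ ≤ (dist P B + dist P C) * (√(dist P B) * √(dist P C) * cos (∠ B P C / 2)) := by
        gcongr

theorem angle_add_angle_add_angle_eq_two_pi_of_wbtw {A B C D P : E} (hD : Wbtw ℝ B D C)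
    (hP : Wbtw ℝ A P D) (hA : P ≠ A) (hB : P ≠ B) (hC : P ≠ C) :
    ∠ B P C + ∠ C P A + ∠ A P B = 2 * π := by
  rcases eq_or_ne P D with rfl | hPD
  · have straight : ∠ B P C = π := Sbtw.angle₁₂₃_eq_pi ⟨hD, hB, hC⟩
    linarith [angle_add_angle_eq_pi_of_angle_eq_pi A straight, angle_comm C P A]
  · have straight : ∠ A P D = π := Sbtw.angle₁₂₃_eq_pi ⟨hP, hA, hPD⟩
    linarith [angle_add_angle_eq_pi_of_angle_eq_pi B straight,
      angle_add_angle_eq_pi_of_angle_eq_pi C straight, angle_add_of_ne_of_ne hB hC hD,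
      angle_comm A P B, angle_comm C P D]

end Angle

section Triangle

variable {V : Type*} [NormedAddCommGroup V] [InnerProductSpace ℝ V] {A B C P : V}

theorem angle_add_angle_add_angle_eq_two_pi_of_mem_convexHull
    (hP : P ∈ convexHull ℝ {A, B, C}) (hA : P ≠ A) (hB : P ≠ B) (hC : P ≠ C) :
    ∠ B P C + ∠ C P A + ∠ A P B = 2 * π := by
  rw [convexHull_insert (Set.insert_nonempty B {C}), convexHull_pair, convexJoin_singleton_left,
    Set.mem_iUnion₂] at hP
  obtain ⟨D, hD, hPD⟩ := hP
  exact angle_add_angle_add_angle_eq_two_pi_of_wbtw (mem_segment_iff_wbtw.1 hD)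
    (mem_segment_iff_wbtw.1 hPD) hA hB hC

theorem two_mul_add_sqrt_mul_sqrt_mul_cos_le_add_dist (hP : P ∈ convexHull ℝ {A, B, C}) :
    2 * (√(dist P B) * √(dist P C) * cos (∠ B P C / 2)
        + √(dist P C) * √(dist P A) * cos (∠ C P A / 2)
        + √(dist P A) * √(dist P B) * cos (∠ A P B / 2))
      ≤ dist P A + dist P B + dist P C := by
  have key := fun α β γ (h : α + β + γ = π) ↦
    two_mul_add_cos_le_add_sq_of_add_eq_pi √(dist P A) √(dist P B) √(dist P C) h
  simp only [sq_sqrt dist_nonneg] at key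
  -- At a vertex two of the cosine terms vanish, so the two angles there only need the right sum.
  rcases eq_or_ne P A with rfl | hA
  · simpa using key (∠ B P C / 2) (π - ∠ B P C / 2) 0 (by ring)
  rcases eq_or_ne P B with rfl | hB
  · simpa using key 0 (∠ C P A / 2) (π - ∠ C P A / 2) (by ring)
  rcases eq_or_ne P C with rfl | hC
  · simpa using key (π - ∠ A P B / 2) 0 (∠ A P B / 2) (by ring)
  exact key _ _ _ (by linarith [angle_add_angle_add_angle_eq_two_pi_of_mem_convexHull hP hA hB hC])

end Triangle

theorem erdos_mordell_inequality_general {V : Type*} [NormedAddCommGroup V] [InnerProductSpace ℝ V]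
    {A B C P : V} (hP : P ∈ convexHull ℝ {A, B, C}) :
    2 * (Metric.infDist P (affineSpan ℝ {B, C} : Set V)
        + Metric.infDist P (affineSpan ℝ {C, A} : Set V)
        + Metric.infDist P (affineSpan ℝ {A, B} : Set V))
      ≤ dist P A + dist P B + dist P C := by
  linarith [two_mul_add_sqrt_mul_sqrt_mul_cos_le_add_dist hP,
    infDist_affineSpan_pair_le_sqrt_mul_sqrt_mul_cos P B C,
    infDist_affineSpan_pair_le_sqrt_mul_sqrt_mul_cos P C A,
    infDist_affineSpan_pair_le_sqrt_mul_sqrt_mul_cos P A B]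

theorem erdos_mordell_inequality
    (A B C P : EuclideanSpace ℝ (Fin 2))
    (hABC : ¬ Collinear ℝ ({A, B, C} : Set (EuclideanSpace ℝ (Fin 2))))
    (hP : P ∈ interior (convexHull ℝ ({A, B, C} : Set (EuclideanSpace ℝ (Fin 2))))) :
    dist P A + dist P B + dist P C ≥
      2 * (Metric.infDist P (affineSpan ℝ ({B, C} : Set (EuclideanSpace ℝ (Fin 2))) : Set (EuclideanSpace ℝ (Fin 2)))
        + Metric.infDist P (affineSpan ℝ ({C, A} : Set (EuclideanSpace ℝ (Fin 2))) : Set (EuclideanSpace ℝ (Fin 2)))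
        + Metric.infDist P (affineSpan ℝ ({A, B} : Set (EuclideanSpace ℝ (Fin 2))) : Set (EuclideanSpace ℝ (Fin 2)))) := by
  exact erdos_mordell_inequality_general (interior_subset hP)
end
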